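/- Let N ≥ 3, let V satisfy condition (V) and the decay condition that there exist A, α > 0 with V⁺(x) ≤ A|x|^{-2-α} for all x ∈ ℝ^N, let f satisfy conditions (f1), (f2), (f3), let λ > 0, and let u be a solution of problem (P_λ). Then the gradient of u is square-integrable: ∫_{ℝ^N} |∇u|² dx < ∞; consequently u ∈ H¹(ℝ^N). -/

import Mathlib

open MeasureTheory Filter Metric Set
open scoped ENNReal NNReal Topology

noncomputable section

/-- Euclidean space `ℝ^N`. -/
abbrev Euc (N : ℕ) := EuclideanSpace ℝ (Fin N)

/-- The Laplace operator on `ℝ^N`: the sum of the second partial derivatives. -/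
def lap (N : ℕ) (u : Euc N → ℝ) (x : Euc N) : ℝ :=
  ∑ i : Fin N,
    fderiv ℝ (fun y => fderiv ℝ u y (EuclideanSpace.single i 1)) x (EuclideanSpace.single i 1)

/-- The principal eigenvalue `λ₁(R)`: the infimum of `∫_{B_R} |∇u|²` over smooth functions
compactly supported in the open ball `B_R` with `∫_{B_R} V u² = 1`. -/
def lam1 (N : ℕ) (V : Euc N → ℝ) (R : ℝ) : ℝ :=
  sInf { t : ℝ | ∃ u : Euc N → ℝ, ContDiff ℝ (⊤ : ℕ∞) u ∧ HasCompactSupport u ∧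
    tsupport u ⊆ ball (0 : Euc N) R ∧
    (∫ x, V x * u x ^ 2) = 1 ∧ t = ∫ x, ‖gradient u x‖ ^ 2 }

/-- `Λ := lim_{R → ∞} λ₁(R)`. -/
def Lam (N : ℕ) (V : Euc N → ℝ) : ℝ := limUnder atTop (lam1 N V)

/-- Condition (V): `V` is a bounded Hölder-continuous function whose positive part
`V⁺ = max(V, 0)` is nontrivial and decomposes as `V₁ + V₂` with `V₁ ∈ L^{N/2}` and
`|x|² V₂(x) → 0` as `|x| → ∞`. -/
def CondV (N : ℕ) (V V₁ V₂ : Euc N → ℝ) : Prop :=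
  (∃ C β : ℝ≥0, 0 < β ∧ β ≤ 1 ∧ HolderWith C β V) ∧
  (∃ C : ℝ, ∀ x, |V x| ≤ C) ∧
  (∃ x, 0 < V x) ∧
  (∀ x, max (V x) 0 = V₁ x + V₂ x) ∧
  MemLp V₁ ((N : ℝ≥0∞) / 2) volume ∧
  Tendsto (fun x : Euc N => ‖x‖ ^ 2 * V₂ x) (cocompact _) (𝓝 0)

/-- The decay condition: `V⁺(x) ≤ A |x|^{-2-α}`. -/
def CondVDecay (N : ℕ) (V : Euc N → ℝ) : Prop :=
  ∃ A α : ℝ, 0 < A ∧ 0 < α ∧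
    ∀ x : Euc N, x ≠ 0 → max (V x) 0 ≤ A * ‖x‖ ^ (-2 - α)

/-- Conditions (f1), (f2), (f3) on the absorption term `f`. -/
def CondF (N : ℕ) (V : Euc N → ℝ) (f : ℝ → ℝ) : Prop :=
  ContDiff ℝ 1 f ∧ (∀ u : ℝ, 0 ≤ u → 0 ≤ f u) ∧
  -- (f1)
  f 0 = 0 ∧ deriv f 0 = 0 ∧
  0 < Filter.liminf (fun u : ℝ => ((deriv f u / u : ℝ) : EReal)) (𝓝[>] (0 : ℝ)) ∧
  -- (f2)
  StrictMonoOn (fun u : ℝ => f u / u) (Ioi 0) ∧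
  -- (f3)
  (∃ L : EReal, Tendsto (fun u : ℝ => ((f u / u : ℝ) : EReal)) atTop (𝓝 L) ∧
    ((⨆ x, |V x| : ℝ) : EReal) < L)

/-- A solution of problem `(P_λ)`: a positive `C²` function solving the logistic equation
and decaying to zero at infinity. -/
structure IsSolution (N : ℕ) (V : Euc N → ℝ) (f : ℝ → ℝ) (lam : ℝ) (u : Euc N → ℝ) : Prop where
  smooth : ContDiff ℝ 2 u
  pos : ∀ x, 0 < u x
  eqn : ∀ x, -lap N u x = lam * (V x * u x - f (u x))
  decay : Tendsto u (cocompact (Euc N)) (𝓝 0)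

/-- The surface integral `∫_{∂B_R} g dσ` over the sphere of radius `R`, written in polar
coordinates with respect to the canonical surface measure on the unit sphere. -/
def sphereInt (N : ℕ) (g : Euc N → ℝ) (R : ℝ) : ℝ :=
  ∫ ω : sphere (0 : Euc N) 1, g (R • (ω : Euc N)) * R ^ (N - 1)
    ∂((volume : Measure (Euc N)).toSphere)

/-! Near infinity `-Δ u ≤ K |x| ^ (-2 - α) u - c u²` for some `c > 0`, because `f(u) ≥ c u²` for
small `u`. Square integrability of `u` follows from this inequality by two complementary arguments.

* In dimension at most four, the linear term is absorbed by the quadratic one at the cost of the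
  integrable function `|x| ^ (-4 - 2 α)`. Testing with a cutoff `ζ_R` and moving the Laplacian onto
  `ζ_R` costs `∫ R ^ (-4)` over the ball of radius `R`, which is bounded in these dimensions.
* In dimension `N ≥ 5`, the quadratic term is dropped and `u` is compared with the supersolutions
  `|x| ^ (-s)`, `0 < s < N - 2`, of the linear equation. The choice `s > N / 2` is possible, and it
  makes `|x| ^ (-2 s)` integrable at infinity.

Since `Δ (u²) = 2 u Δ u + 2 |∇ u|²`, testing this identity with `ζ_R` bounds `∫ |∇ u|²` by `∫ u²`
and the negative part of `u Δ u`, which is at most a multiple of `u²` near infinity.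
-/

open scoped Gradient Laplacian

section Calculus

variable {E : Type*} [NormedAddCommGroup E] [InnerProductSpace ℝ E] {x : E}

lemma contDiffAt_norm_rpow {n : WithTop ℕ∞} (q : ℝ) (hx : x ≠ 0) :
    ContDiffAt ℝ n (fun y : E => ‖y‖ ^ q) x :=
  (contDiffAt_norm ℝ hx).rpow_const_of_ne (norm_ne_zero_iff.2 hx)

variable [FiniteDimensional ℝ E] {u : E → ℝ}

lemma laplacian_eq_sum_fderiv_fderiv {ι : Type*} [Fintype ι] (b : OrthonormalBasis ι ℝ E)
    (hu : ContDiffAt ℝ 2 u x) :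
    Δ u x = ∑ i, fderiv ℝ (fun y => fderiv ℝ u y (b i)) x (b i) := by
  have hdu : DifferentiableAt ℝ (fderiv ℝ u) x :=
    (hu.fderiv_right (m := 1) (by norm_num)).differentiableAt one_ne_zero
  simp only [InnerProductSpace.laplacian_eq_iteratedFDeriv_orthonormalBasis u b,
    iteratedFDeriv_two_apply, Matrix.cons_val_zero, Matrix.cons_val_one]
  refine Finset.sum_congr rfl fun i _ => ?_
  rw [fderiv_clm_apply hdu (differentiableAt_const _)]
  simp

lemma continuous_laplacian (hu : ContDiff ℝ 2 u) : Continuous (Δ u) := by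
  have : Continuous (iteratedFDeriv ℝ 2 u) := hu.continuous_iteratedFDeriv le_rfl
  rw [InnerProductSpace.laplacian_eq_iteratedFDeriv_stdOrthonormalBasis]
  fun_prop

lemma hasCompactSupport_laplacian (hu : HasCompactSupport u) : HasCompactSupport (Δ u) := by
  rw [InnerProductSpace.laplacian_eq_iteratedFDeriv_stdOrthonormalBasis]
  refine (hu.iteratedFDeriv (𝕜 := ℝ) 2).mono fun x hx => ?_
  contrapose! hx
  simp [Function.notMem_support.1 hx]

lemma norm_gradient_sq_eq_sum {ι : Type*} [Fintype ι] (b : OrthonormalBasis ι ℝ E) :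
    ‖∇ u x‖ ^ 2 = ∑ i, fderiv ℝ u x (b i) ^ 2 := by
  simp [← b.sum_sq_norm_inner_left (∇ u x), inner_gradient_left]

lemma laplacian_comp {g g' : ℝ → ℝ} {g'' : ℝ} (hg : ∀ᶠ t in 𝓝 (u x), HasDerivAt g (g' t) t)
    (hg' : HasDerivAt g' g'' (u x)) (hu : ContDiffAt ℝ 2 u x) (hgu : ContDiffAt ℝ 2 (g ∘ u) x) :
    Δ (g ∘ u) x = g' (u x) * Δ u x + g'' * ‖∇ u x‖ ^ 2 := by
  let b := stdOrthonormalBasis ℝ E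
  have hu_near : ∀ᶠ y in 𝓝 x, DifferentiableAt ℝ u y :=
    (hu.eventually (by simp)).mono fun y hy => hy.differentiableAt two_ne_zero
  rw [laplacian_eq_sum_fderiv_fderiv b hgu, laplacian_eq_sum_fderiv_fderiv b hu,
    norm_gradient_sq_eq_sum b, Finset.mul_sum, Finset.mul_sum, ← Finset.sum_add_distrib]
  refine Finset.sum_congr rfl fun i _ => ?_
  have h_first : (fun y => fderiv ℝ (g ∘ u) y (b i)) =ᶠ[𝓝 x]
      fun y => g' (u y) * fderiv ℝ u y (b i) := by
    filter_upwards [hu_near, hu.continuousAt.eventually hg] with y huy hgy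
    rw [(hgy.comp_hasFDerivAt y huy.hasFDerivAt).fderiv]
    simp
  have hdu : DifferentiableAt ℝ (fun y => fderiv ℝ u y (b i)) x :=
    ((hu.fderiv_right (m := 1) (by norm_num)).clm_apply contDiffAt_const).differentiableAt
      one_ne_zero
  have hdg : HasFDerivAt (fun y => g' (u y)) (g'' • fderiv ℝ u x) x :=
    hg'.comp_hasFDerivAt x hu_near.self_of_nhds.hasFDerivAt
  rw [h_first.fderiv_eq, (hdg.fun_mul hdu.hasFDerivAt).fderiv]
  simp only [add_apply, smul_apply, smul_eq_mul]
  ring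

lemma laplacian_sq (hu : ContDiffAt ℝ 2 u x) :
    Δ (fun y => u y ^ 2) x = 2 * (u x * Δ u x + ‖∇ u x‖ ^ 2) := by
  have h_sq : ∀ t : ℝ, HasDerivAt (fun s : ℝ => s ^ 2) (2 * t) t := fun t => by
    simpa using hasDerivAt_pow 2 t
  have h := laplacian_comp (.of_forall h_sq) (by simpa using (hasDerivAt_id (u x)).const_mul 2) hu
    (hu.pow 2)
  simp only [Function.comp_def] at h
  rw [h]
  ring

lemma norm_gradient_norm_sq_sq (x : E) : ‖∇ (fun y : E => ‖y‖ ^ 2) x‖ ^ 2 = 4 * ‖x‖ ^ 2 := by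
  have h : ∇ (fun y : E => ‖y‖ ^ 2) x = (2 : ℝ) • x := by
    refine ext_inner_right ℝ fun v => ?_
    rw [inner_gradient_left, fderiv_norm_sq_apply]
    simp [inner_smul_left]
  rw [h, norm_smul, mul_pow]
  norm_num

lemma laplacian_norm_sq (x : E) :
    Δ (fun y : E => ‖y‖ ^ 2) x = 2 * Module.finrank ℝ E := by
  let b := stdOrthonormalBasis ℝ E
  have h_first : ∀ i, (fun y : E => fderiv ℝ (fun z : E => ‖z‖ ^ 2) y (b i)) =
      ⇑((2 : ℝ) • innerSL ℝ (b i)) := fun i => by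
    ext y
    simp [real_inner_comm, two_smul]
  rw [laplacian_eq_sum_fderiv_fderiv b (contDiff_norm_sq ℝ).contDiffAt]
  simp only [h_first, ContinuousLinearMap.fderiv]
  simp [mul_comm]

lemma laplacian_norm_rpow (q : ℝ) (hx : x ≠ 0) :
    Δ (fun y : E => ‖y‖ ^ q) x = q * (Module.finrank ℝ E + q - 2) * ‖x‖ ^ (q - 2) := by
  have hx₀ : 0 < ‖x‖ := norm_pos_iff.2 hx
  have h_rpow_sq : ∀ (r : ℝ) (y : E), (‖y‖ ^ 2) ^ r = ‖y‖ ^ (2 * r) := fun r y => by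
    rw [← Real.rpow_natCast_mul (norm_nonneg y), Nat.cast_ofNat]
  have h_comp : (fun y : E => ‖y‖ ^ q) = (fun t : ℝ => t ^ (q / 2)) ∘ fun y : E => ‖y‖ ^ 2 := by
    ext y
    simp only [Function.comp_apply, h_rpow_sq]
    ring_nf
  have h_deriv : ∀ᶠ t in 𝓝 (‖x‖ ^ 2),
      HasDerivAt (fun s : ℝ => s ^ (q / 2)) (q / 2 * t ^ (q / 2 - 1)) t :=
    (eventually_ne_nhds (by positivity)).mono fun t ht => Real.hasDerivAt_rpow_const (.inl ht)
  have h_deriv₂ := (Real.hasDerivAt_rpow_const (p := q / 2 - 1)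
    (.inl (by positivity : ‖x‖ ^ 2 ≠ 0))).const_mul (q / 2)
  have h_norm_sq : ContDiffAt ℝ 2 (fun y : E => ‖y‖ ^ 2) x := (contDiff_norm_sq ℝ).contDiffAt
  have h_contDiff := contDiffAt_norm_rpow (n := 2) q hx
  rw [h_comp] at h_contDiff
  rw [h_comp, laplacian_comp (u := fun y => ‖y‖ ^ 2) h_deriv h_deriv₂ h_norm_sq h_contDiff,
    laplacian_norm_sq, norm_gradient_norm_sq_sq, h_rpow_sq, h_rpow_sq,
    show 2 * (q / 2 - 1) = q - 2 by ring,
    show ‖x‖ ^ (q - 2) = ‖x‖ ^ (2 * (q / 2 - 1 - 1)) * ‖x‖ ^ 2 by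
      rw [← Real.rpow_natCast ‖x‖ 2, ← Real.rpow_add hx₀]; congr 1; push_cast; ring]
  ring

end Calculus

section MaximumPrinciple

lemma deriv_deriv_nonneg_of_isLocalMin {f : ℝ → ℝ} {t : ℝ} (hf : ContinuousAt f t)
    (hmin : IsLocalMin f t) : 0 ≤ deriv (deriv f) t := by
  by_contra! hneg
  have hmax : IsLocalMax f t := isLocalMax_of_deriv_deriv_neg hneg hmin.deriv_eq_zero hf
  have hconst : f =ᶠ[𝓝 t] fun _ => f t :=
    (hmin.and hmax).mono fun s hs => le_antisymm hs.2 hs.1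
  simp [hconst.deriv.deriv_eq] at hneg

variable {E : Type*} [NormedAddCommGroup E]

lemma deriv_deriv_comp_line [NormedSpace ℝ E] {u : E → ℝ} {x : E} (hu : ContDiffAt ℝ 2 u x)
    (v : E) :
    deriv (deriv fun t : ℝ => u (x + t • v)) 0 = fderiv ℝ (fun y => fderiv ℝ u y v) x v := by
  have hline : ∀ t : ℝ, HasDerivAt (fun t : ℝ => x + t • v) v t := fun t => by
    simpa using ((hasDerivAt_id t).smul_const v).const_add x
  have htend : Tendsto (fun t : ℝ => x + t • v) (𝓝 0) (𝓝 x) := by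
    simpa using (hline 0).continuousAt.tendsto
  have h_first : deriv (fun t : ℝ => u (x + t • v)) =ᶠ[𝓝 0] fun t => fderiv ℝ u (x + t • v) v := by
    filter_upwards [htend.eventually (hu.eventually (by simp))] with t ht
    exact ((ht.differentiableAt two_ne_zero).hasFDerivAt.comp_hasDerivAt t (hline t)).deriv
  have hdu : DifferentiableAt ℝ (fun y => fderiv ℝ u y v) (x + (0 : ℝ) • v) := by
    simpa using ((hu.fderiv_right (m := 1) (by norm_num)).clm_apply
      contDiffAt_const).differentiableAt one_ne_zero
  rw [h_first.deriv_eq]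
  simpa [Function.comp_def] using (hdu.hasFDerivAt.comp_hasDerivAt 0 (hline 0)).deriv

variable [InnerProductSpace ℝ E] [FiniteDimensional ℝ E] {u : E → ℝ} {x : E}

lemma laplacian_nonneg_of_isLocalMin (hu : ContDiffAt ℝ 2 u x) (hmin : IsLocalMin u x) :
    0 ≤ Δ u x := by
  rw [laplacian_eq_sum_fderiv_fderiv (stdOrthonormalBasis ℝ E) hu]
  refine Finset.sum_nonneg fun i _ => ?_
  rw [← deriv_deriv_comp_line hu]
  set line : ℝ → E := fun t => x + t • stdOrthonormalBasis ℝ E i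
  have hline₀ : line 0 = x := by simp [line]
  have hline : ContinuousAt line 0 := by fun_prop
  refine deriv_deriv_nonneg_of_isLocalMin (f := u ∘ line) ?_ ?_
  · exact ContinuousAt.comp (hline₀ ▸ hu.continuousAt) hline
  · exact IsMinFilter.comp_tendsto (hline₀ ▸ hmin) hline

end MaximumPrinciple

section Comparison

variable {E : Type*} [NormedAddCommGroup E] [InnerProductSpace ℝ E] [FiniteDimensional ℝ E]
  {q W W' : E → ℝ} {x : E}

/-- `W` is a positive strict supersolution of the linear equation `-Δ W = q W` at the point `x`. -/
structure StrictSupersolutionAt (q W : E → ℝ) (x : E) : Prop where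
  contDiffAt : ContDiffAt ℝ 2 W x
  pos : 0 < W x
  lt_neg_laplacian : q x * W x < -Δ W x

namespace StrictSupersolutionAt

lemma add (h : StrictSupersolutionAt q W x) (h' : StrictSupersolutionAt q W' x) :
    StrictSupersolutionAt q (fun y => W y + W' y) x where
  contDiffAt := h.contDiffAt.add h'.contDiffAt
  pos := add_pos h.pos h'.pos
  lt_neg_laplacian := by
    have h_add : Δ (fun y => W y + W' y) x = Δ W x + Δ W' x :=
      h.contDiffAt.laplacian_add h'.contDiffAt
    linarith [h.lt_neg_laplacian, h'.lt_neg_laplacian]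

lemma const_mul (h : StrictSupersolutionAt q W x) {c : ℝ} (hc : 0 < c) :
    StrictSupersolutionAt q (fun y => c * W y) x where
  contDiffAt := contDiffAt_const.mul h.contDiffAt
  pos := mul_pos hc h.pos
  lt_neg_laplacian := by
    have h_smul : Δ (fun y => c * W y) x = c * Δ W x :=
      InnerProductSpace.laplacian_smul c h.contDiffAt
    linarith [mul_lt_mul_of_pos_left h.lt_neg_laplacian hc]

end StrictSupersolutionAt

variable {S : Set E} {u : E → ℝ}

/- At an interior maximum of `u / W` with value `t > 1`, the function `t W - u` has a local minimum
with value zero, although it is a strict supersolution. -/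
theorem le_of_strictSupersolutionAt (hS : IsClosed S) (hu : ∀ x ∈ S, ContDiffAt ℝ 2 u x)
    (hW : ∀ x ∈ S, StrictSupersolutionAt q W x) (hsub : ∀ x ∈ S, -Δ u x ≤ q x * u x)
    (hbdry : ∀ x ∈ frontier S, u x ≤ W x)
    (hinfty : ∀ᶠ x in cocompact E, x ∈ S → u x ≤ W x) : ∀ x ∈ S, u x ≤ W x := by
  by_contra! ⟨y, hyS, hy⟩
  have h_div_le : ∀ x ∈ S, u x ≤ W x ↔ u x / W x ≤ 1 := fun x hx =>
    (div_le_one (hW x hx).pos).symm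
  have hy_div : 1 < u y / W y := (one_lt_div (hW y hyS).pos).2 hy
  obtain ⟨z, hzS, hz⟩ : ∃ z ∈ S, IsMaxOn (fun x => u x / W x) S z := by
    refine ContinuousOn.exists_isMaxOn' (fun x hx => ?_) hS hyS ?_
    · exact ((hu x hx).continuousAt.div (hW x hx).contDiffAt.continuousAt
        (hW x hx).pos.ne').continuousWithinAt
    · filter_upwards [mem_inf_of_left hinfty, mem_inf_of_right (mem_principal_self S)] with x hx hxS
      exact ((h_div_le x hxS).1 (hx hxS)).trans hy_div.le
  set t := u z / W z
  have ht : 1 < t := hy_div.trans_le (hz hyS)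
  have hz_interior : S ∈ 𝓝 z := by
    by_contra h_not_mem
    have hz_frontier : z ∈ frontier S :=
      ⟨subset_closure hzS, fun h => h_not_mem (mem_interior_iff_mem_nhds.1 h)⟩
    exact ht.not_ge ((h_div_le z hzS).1 (hbdry z hz_frontier))
  have huz : u z = t * W z := (div_mul_cancel₀ _ (hW z hzS).pos.ne').symm
  have h_min : IsLocalMin (fun x => t * W x - u x) z := by
    filter_upwards [hz_interior] with x hx
    have := (div_le_iff₀ (hW x hx).pos).1 (hz hx)
    linarith
  have hWt := (hW z hzS).const_mul (one_pos.trans ht)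
  have h_laplacian : Δ (fun x => t * W x - u x) z = Δ (fun x => t * W x) z - Δ u z :=
    hWt.contDiffAt.laplacian_sub (hu z hzS)
  have h_nonneg := laplacian_nonneg_of_isLocalMin (hWt.contDiffAt.sub (hu z hzS)) h_min
  have h_lt := hWt.lt_neg_laplacian
  have h_sub := hsub z hzS
  rw [huz] at h_sub
  linarith

/- Adding `ε W'` to `W` makes the comparison function dominate `u` near infinity; then `ε → 0`. -/
theorem le_of_strictSupersolutionAt_of_tendsto_zero (hS : IsClosed S)
    (hu : ∀ x ∈ S, ContDiffAt ℝ 2 u x) (hW : ∀ x ∈ S, StrictSupersolutionAt q W x)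
    (hW' : ∀ x ∈ S, StrictSupersolutionAt q W' x) (hW'₁ : ∀ x ∈ S, 1 ≤ W' x)
    (hsub : ∀ x ∈ S, -Δ u x ≤ q x * u x) (hbdry : ∀ x ∈ frontier S, u x ≤ W x)
    (hdecay : Tendsto u (cocompact E) (𝓝 0)) : ∀ x ∈ S, u x ≤ W x := by
  have h_le {ε : ℝ} (hε : 0 < ε) : ∀ x ∈ S, u x ≤ W x + ε * W' x := by
    refine le_of_strictSupersolutionAt hS hu (fun x hx => (hW x hx).add ((hW' x hx).const_mul hε))
      hsub (fun x hx => ?_) ?_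
    · have hxS := hS.frontier_subset hx
      exact (hbdry x hx).trans (le_add_of_nonneg_right (mul_pos hε (hW' x hxS).pos).le)
    · filter_upwards [hdecay.eventually_le_const hε] with x hux hxS
      calc u x ≤ ε := hux
        _ ≤ ε * W' x := le_mul_of_one_le_right hε.le (hW'₁ x hxS)
        _ ≤ W x + ε * W' x := le_add_of_nonneg_left (hW x hxS).pos.le
  intro x hx
  refine le_of_forall_pos_le_add fun η hη => ?_
  have hW'x := (hW' x hx).pos
  simpa [hW'x.ne'] using h_le (div_pos hη hW'x) x hx

end Comparison

section Cutoff

lemma hasDerivAt_max_zero_pow (n : ℕ) (t : ℝ) :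
    HasDerivAt (fun s : ℝ => max s 0 ^ (n + 2)) ((n + 2) * max t 0 ^ (n + 1)) t := by
  rcases lt_trichotomy t 0 with ht | rfl | ht
  · have h_zero : (fun s : ℝ => max s 0 ^ (n + 2)) =ᶠ[𝓝 t] fun _ => 0 := by
      filter_upwards [Iio_mem_nhds ht] with s hs
      simp [max_eq_right (mem_Iio.1 hs).le]
    simpa [max_eq_right ht.le] using (hasDerivAt_const t (0 : ℝ)).congr_of_eventuallyEq h_zero
  · have h_bigO : (fun s : ℝ => max s 0 ^ (n + 2)) =O[𝓝 0] fun s => ‖s - 0‖ ^ (n + 2) := by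
      refine .of_norm_le fun s => ?_
      rw [sub_zero, norm_pow]
      gcongr
      simpa using abs_max_le_max_abs_abs (a := s) (b := 0)
    simpa using (h_bigO.hasFDerivAt (by lia)).hasDerivAt
  · have h_pow : (fun s : ℝ => max s 0 ^ (n + 2)) =ᶠ[𝓝 t] fun s => s ^ (n + 2) := by
      filter_upwards [Ioi_mem_nhds ht] with s hs
      rw [max_eq_left (mem_Ioi.1 hs).le]
    simpa [max_eq_left ht.le] using (hasDerivAt_pow (n + 2) t).congr_of_eventuallyEq h_pow

lemma contDiff_max_zero_pow (n : ℕ) : ContDiff ℝ n fun s : ℝ => max s 0 ^ (n + 1) := by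
  induction n with
  | zero => exact contDiff_zero.2 (by fun_prop)
  | succ n ih =>
    have h_deriv := hasDerivAt_max_zero_pow n
    rw [Nat.cast_succ, contDiff_succ_iff_deriv, funext fun t => (h_deriv t).deriv]
    exact ⟨fun t => (h_deriv t).differentiableAt, by simp, contDiff_const.mul ih⟩

variable {E : Type*} [NormedAddCommGroup E]

/-- The truncated paraboloid `(1 - ‖x‖² / R²)⁺`, supported in the closed ball of radius `R`. Its
fourth power is used as a `C²` cutoff function. -/
def paraboloid (R : ℝ) (x : E) : ℝ := max (1 - ‖x‖ ^ 2 / R ^ 2) 0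

variable {R : ℝ} {x : E}

lemma paraboloid_nonneg : 0 ≤ paraboloid R x := le_max_right _ _

lemma paraboloid_le_one : paraboloid R x ≤ 1 :=
  max_le (sub_le_self _ (by positivity)) zero_le_one

lemma three_fourths_le_paraboloid (hR : 0 < R) (hx : 2 * ‖x‖ ≤ R) : 3 / 4 ≤ paraboloid R x := by
  refine le_max_of_le_left ?_
  have h_sq : ‖x‖ ^ 2 / R ^ 2 ≤ 1 / 4 := by
    rw [div_le_iff₀ (by positivity)]
    nlinarith [norm_nonneg x]
  linarith

lemma paraboloid_eq_zero (hR : 0 < R) (hx : R ≤ ‖x‖) : paraboloid R x = 0 := by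
  refine max_eq_right ?_
  rw [sub_nonpos, one_le_div (by positivity)]
  gcongr

lemma continuous_paraboloid : Continuous (paraboloid R : E → ℝ) := by
  unfold paraboloid
  fun_prop

lemma hasCompactSupport_paraboloid_pow [ProperSpace E] (hR : 0 < R) :
    HasCompactSupport fun x : E => paraboloid R x ^ 4 :=
  .intro (isCompact_closedBall 0 R) fun x hx => by
    have hRx : R ≤ ‖x‖ := (not_le.1 (mt mem_closedBall_zero_iff.2 hx)).le
    simp [paraboloid_eq_zero hR hRx]

variable [InnerProductSpace ℝ E]

lemma contDiff_paraboloid_pow : ContDiff ℝ 2 fun x : E => paraboloid R x ^ 4 :=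
  ((contDiff_max_zero_pow 3).of_le (by norm_num)).comp
    (contDiff_const.sub ((contDiff_norm_sq ℝ).div_const _))

variable [FiniteDimensional ℝ E]

lemma laplacian_paraboloid_pow (R : ℝ) (x : E) :
    Δ (fun y : E => paraboloid R y ^ 4) x =
      48 * ‖x‖ ^ 2 / R ^ 4 * paraboloid R x ^ 2 -
        8 * Module.finrank ℝ E / R ^ 2 * paraboloid R x ^ 3 := by
  have h_inner : ∀ t : ℝ, HasDerivAt (fun s : ℝ => 1 - s / R ^ 2) (-(1 / R ^ 2)) t := fun t =>
    ((hasDerivAt_id t).div_const (R ^ 2)).const_sub 1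
  have h_deriv : ∀ t : ℝ, HasDerivAt (fun s : ℝ => max (1 - s / R ^ 2) 0 ^ 4)
      (-4 / R ^ 2 * max (1 - t / R ^ 2) 0 ^ 3) t := fun t =>
    ((hasDerivAt_max_zero_pow 2 _).comp t (h_inner t)).congr_deriv (by push_cast; ring)
  have h_deriv₂ : HasDerivAt (fun s : ℝ => -4 / R ^ 2 * max (1 - s / R ^ 2) 0 ^ 3)
      (12 / R ^ 4 * paraboloid R x ^ 2) (‖x‖ ^ 2) :=
    (((hasDerivAt_max_zero_pow 1 _).comp _ (h_inner _)).const_mul _).congr_deriv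
      (by rw [paraboloid]; push_cast; ring)
  have h := laplacian_comp (u := fun y : E => ‖y‖ ^ 2) (.of_forall h_deriv) h_deriv₂
    (contDiff_norm_sq ℝ).contDiffAt contDiff_paraboloid_pow.contDiffAt
  rw [laplacian_norm_sq, norm_gradient_norm_sq_sq] at h
  refine h.trans ?_
  rw [paraboloid]
  ring

lemma abs_laplacian_paraboloid_pow_le (hR : 0 < R) (x : E) :
    |Δ (fun y : E => paraboloid R y ^ 4) x| ≤
      (48 + 8 * Module.finrank ℝ E) / R ^ 2 * paraboloid R x ^ 2 := by
  rw [laplacian_paraboloid_pow]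
  rcases le_total R ‖x‖ with hx | hx
  · simp [paraboloid_eq_zero hR hx]
  have h_first : 48 * ‖x‖ ^ 2 / R ^ 4 * paraboloid R x ^ 2 ≤ 48 / R ^ 2 * paraboloid R x ^ 2 := by
    gcongr ?_ * _
    rw [div_le_div_iff₀ (by positivity) (by positivity)]
    nlinarith [pow_le_pow_left₀ (norm_nonneg x) hx 2, sq_nonneg R]
  have h_second : 8 * Module.finrank ℝ E / R ^ 2 * paraboloid R x ^ 3 ≤
      8 * Module.finrank ℝ E / R ^ 2 * paraboloid R x ^ 2 :=
    mul_le_mul_of_nonneg_left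
      (pow_le_pow_of_le_one paraboloid_nonneg paraboloid_le_one (by norm_num)) (by positivity)
  have h_pos₁ : 0 ≤ 48 * ‖x‖ ^ 2 / R ^ 4 * paraboloid R x ^ 2 := by positivity
  have h_pos₂ : 0 ≤ 8 * Module.finrank ℝ E / R ^ 2 * paraboloid R x ^ 3 :=
    mul_nonneg (by positivity) (pow_nonneg paraboloid_nonneg 3)
  rw [add_div, add_mul, abs_le]
  constructor <;> linarith [h_pos₁.trans h_first, h_pos₂.trans h_second]

/- The remainder has integral `O(R ^ (dim E - 4))`. -/
lemma laplacian_paraboloid_pow_mul_le {R c : ℝ} (hR : 0 < R) (hc : 0 < c) (x : E) (t : ℝ) :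
    Δ (fun y : E => paraboloid R y ^ 4) x * t ≤ c / 2 * (paraboloid R x ^ 4 * t ^ 2) +
      (closedBall (0 : E) R).indicator
        (fun _ => (48 + 8 * Module.finrank ℝ E) ^ 2 / (2 * c * R ^ 4)) x := by
  set B : ℝ := 48 + 8 * Module.finrank ℝ E
  by_cases hx : x ∈ closedBall (0 : E) R
  · rw [indicator_of_mem hx]
    calc Δ (fun y : E => paraboloid R y ^ 4) x * t
        ≤ |Δ (fun y : E => paraboloid R y ^ 4) x| * |t| := (le_abs_self _).trans (abs_mul _ _).le
      _ ≤ B / R ^ 2 * paraboloid R x ^ 2 * |t| := by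
        gcongr
        exact abs_laplacian_paraboloid_pow_le hR x
      _ ≤ c / 2 * (paraboloid R x ^ 2 * |t|) ^ 2 + (B / R ^ 2) ^ 2 / (2 * c) := by
        have h_young := two_mul_le_add_mul_sq (a := paraboloid R x ^ 2 * |t|) (b := B / R ^ 2) hc
        linear_combination h_young / 2
      _ = c / 2 * (paraboloid R x ^ 4 * t ^ 2) + B ^ 2 / (2 * c * R ^ 4) := by
        rw [mul_pow, sq_abs]
        ring
  · have hRx : R ≤ ‖x‖ := (not_le.1 (mt mem_closedBall_zero_iff.2 hx)).le
    have h_zero : Δ (fun y : E => paraboloid R y ^ 4) x = 0 := by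
      simp [laplacian_paraboloid_pow, paraboloid_eq_zero hR hRx]
    simp [h_zero, hx, paraboloid_eq_zero hR hRx]

end Cutoff

section Integration

variable {E : Type*} [NormedAddCommGroup E] [NormedSpace ℝ E] [FiniteDimensional ℝ E]
  [MeasurableSpace E] [BorelSpace E] {μ : Measure E} [μ.IsAddHaarMeasure]

lemma integral_mul_fderiv_eq_neg_of_hasCompactSupport {φ w : E → ℝ} (hφ : ContDiff ℝ 1 φ)
    (hφc : HasCompactSupport φ) (hw : ContDiff ℝ 1 w) (v : E) :
    ∫ x, φ x * fderiv ℝ w x v ∂μ = -∫ x, fderiv ℝ φ x v * w x ∂μ := by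
  have hφ' : Continuous fun x => fderiv ℝ φ x v :=
    (hφ.continuous_fderiv one_ne_zero).clm_apply continuous_const
  have hw' : Continuous fun x => fderiv ℝ w x v :=
    (hw.continuous_fderiv one_ne_zero).clm_apply continuous_const
  exact integral_mul_fderiv_eq_neg_fderiv_mul_of_integrable
    ((hφ'.mul hw.continuous).integrable_of_hasCompactSupport (hφc.fderiv_apply ℝ v).mul_right)
    ((hφ.continuous.mul hw').integrable_of_hasCompactSupport hφc.mul_right)
    ((hφ.continuous.mul hw.continuous).integrable_of_hasCompactSupport hφc.mul_right)
    (fun x _ => hφ.differentiable one_ne_zero x) (fun x _ => hw.differentiable one_ne_zero x)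

end Integration

section Green

variable {E : Type*} [NormedAddCommGroup E] [InnerProductSpace ℝ E] [FiniteDimensional ℝ E]
  [MeasurableSpace E] [BorelSpace E] {μ : Measure E} [μ.IsAddHaarMeasure] {φ w g k u : E → ℝ}

theorem integral_mul_laplacian_comm (hφ : ContDiff ℝ 2 φ) (hφc : HasCompactSupport φ)
    (hw : ContDiff ℝ 2 w) : ∫ x, φ x * Δ w x ∂μ = ∫ x, Δ φ x * w x ∂μ := by
  let b := stdOrthonormalBasis ℝ E
  have h_partial {v : E → ℝ} (hv : ContDiff ℝ 2 v) (e : E) :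
      ContDiff ℝ 1 fun x => fderiv ℝ v x e :=
    (hv.fderiv_right (m := 1) (by norm_num)).clm_apply contDiff_const
  have h_partial₂ {v : E → ℝ} (hv : ContDiff ℝ 2 v) (e : E) :
      Continuous fun x => fderiv ℝ (fun y => fderiv ℝ v y e) x e :=
    ((h_partial hv e).continuous_fderiv one_ne_zero).clm_apply continuous_const
  have hφc' (e : E) : HasCompactSupport fun x => fderiv ℝ φ x e := hφc.fderiv_apply ℝ e
  have h_parts (e : E) : ∫ x, φ x * fderiv ℝ (fun y => fderiv ℝ w y e) x e ∂μ =
      ∫ x, fderiv ℝ (fun y => fderiv ℝ φ y e) x e * w x ∂μ := by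
    rw [integral_mul_fderiv_eq_neg_of_hasCompactSupport (hφ.of_le one_le_two) hφc
        (h_partial hw e),
      integral_mul_fderiv_eq_neg_of_hasCompactSupport (h_partial hφ e) (hφc' e)
        (hw.of_le one_le_two), neg_neg]
  simp only [laplacian_eq_sum_fderiv_fderiv b hφ.contDiffAt,
    laplacian_eq_sum_fderiv_fderiv b hw.contDiffAt, Finset.mul_sum, Finset.sum_mul]
  rw [integral_finsetSum, integral_finsetSum]
  · exact Finset.sum_congr rfl fun i _ => h_parts (b i)
  · exact fun i _ => ((h_partial₂ hφ (b i)).mul hw.continuous).integrable_of_hasCompactSupport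
      ((hφc' (b i)).fderiv_apply ℝ (b i)).mul_right
  · exact fun i _ => (hφ.continuous.mul (h_partial₂ hw (b i))).integrable_of_hasCompactSupport
      hφc.mul_right

lemma integrable_of_forall_integral_paraboloid_pow_mul_le {C : ℝ} (hg : Continuous g)
    (hg₀ : ∀ x, 0 ≤ g x) (hC : ∀ R : ℝ, 1 ≤ R → ∫ x, paraboloid R x ^ 4 * g x ∂μ ≤ C) :
    Integrable g μ := by
  have h_cover : AECover μ atTop fun n : ℕ => closedBall (0 : E) n :=
    aecover_closedBall tendsto_natCast_atTop_atTop
  refine h_cover.integrable_of_integral_bounded_of_nonneg_ae (4 * C)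
    (fun n => hg.continuousOn.integrableOn_compact (isCompact_closedBall 0 _))
    (.of_forall hg₀) ?_
  filter_upwards [eventually_ge_atTop 1] with n hn
  have hn' : (1 : ℝ) ≤ n := by exact_mod_cast hn
  have h_int : Integrable (fun x => paraboloid (2 * n : ℝ) x ^ 4 * g x) μ :=
    (((continuous_paraboloid.pow 4).mul hg).integrable_of_hasCompactSupport
      (hasCompactSupport_paraboloid_pow (by linarith)).mul_right)
  have h_nonneg (x : E) : 0 ≤ paraboloid (2 * n : ℝ) x ^ 4 * g x :=
    mul_nonneg (pow_nonneg paraboloid_nonneg 4) (hg₀ x)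
  -- the constant comes from `(3 / 4) ^ 4 ≥ 1 / 4`
  have h_le : ∀ x ∈ closedBall (0 : E) n, g x ≤ 4 * (paraboloid (2 * n : ℝ) x ^ 4 * g x) := by
    intro x hx
    have h_low : (3 / 4 : ℝ) ^ 4 ≤ paraboloid (2 * n : ℝ) x ^ 4 := by
      gcongr
      exact three_fourths_le_paraboloid (by linarith) (by linarith [mem_closedBall_zero_iff.1 hx])
    nlinarith [hg₀ x]
  calc ∫ x in closedBall 0 n, g x ∂μ
      ≤ ∫ x in closedBall 0 n, 4 * (paraboloid (2 * n : ℝ) x ^ 4 * g x) ∂μ :=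
        setIntegral_mono_on (hg.continuousOn.integrableOn_compact (isCompact_closedBall 0 _))
          (h_int.const_mul 4).integrableOn measurableSet_closedBall h_le
    _ ≤ ∫ x, 4 * (paraboloid (2 * n : ℝ) x ^ 4 * g x) ∂μ :=
        setIntegral_le_integral (h_int.const_mul 4)
          (.of_forall fun x => mul_nonneg zero_le_four (h_nonneg x))
    _ ≤ 4 * C := by
        rw [integral_const_mul]
        gcongr
        exact hC _ (by linarith)

lemma integral_paraboloid_pow_mul_le {R : ℝ} (hR : 0 < R) (hw : ContDiff ℝ 2 w)
    (hg : Continuous g) (hk : Integrable k μ) (hgk : ∀ x, g x ≤ Δ w x + k x) :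
    ∫ x, paraboloid R x ^ 4 * g x ∂μ ≤
      ∫ x, Δ (fun y : E => paraboloid R y ^ 4) x * w x ∂μ + ∫ x, |k x| ∂μ := by
  have h_cont : Continuous fun x : E => paraboloid R x ^ 4 := continuous_paraboloid.pow 4
  have h_supp := hasCompactSupport_paraboloid_pow (E := E) hR
  have h_int {v : E → ℝ} (hv : Continuous v) : Integrable (fun x => paraboloid R x ^ 4 * v x) μ :=
    (h_cont.mul hv).integrable_of_hasCompactSupport h_supp.mul_right
  rw [← integral_mul_laplacian_comm contDiff_paraboloid_pow h_supp hw,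
    ← integral_add (h_int (continuous_laplacian hw)) hk.abs]
  refine integral_mono (h_int hg) ((h_int (continuous_laplacian hw)).add hk.abs) fun x => ?_
  have h₀ : 0 ≤ paraboloid R x ^ 4 := pow_nonneg paraboloid_nonneg 4
  have h₁ : paraboloid R x ^ 4 ≤ 1 := pow_le_one₀ paraboloid_nonneg paraboloid_le_one
  have h_k : paraboloid R x ^ 4 * k x ≤ |k x| :=
    (mul_le_mul_of_nonneg_left (le_abs_self _) h₀).trans (mul_le_of_le_one_left (abs_nonneg _) h₁)
  calc paraboloid R x ^ 4 * g x ≤ paraboloid R x ^ 4 * (Δ w x + k x) := by gcongr; exact hgk x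
    _ ≤ paraboloid R x ^ 4 * Δ w x + |k x| := by linarith

theorem integrable_of_le_laplacian_add (hw : ContDiff ℝ 2 w) (hw_int : Integrable w μ)
    (hg : Continuous g) (hg₀ : ∀ x, 0 ≤ g x) (hk : Integrable k μ)
    (hgk : ∀ x, g x ≤ Δ w x + k x) : Integrable g μ := by
  set B : ℝ := 48 + 8 * Module.finrank ℝ E
  refine integrable_of_forall_integral_paraboloid_pow_mul_le
    (C := B * ∫ x, |w x| ∂μ + ∫ x, |k x| ∂μ) hg hg₀ fun R hR => ?_
  have hR₀ : 0 < R := by linarith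
  refine (integral_paraboloid_pow_mul_le hR₀ hw hg hk hgk).trans ?_
  gcongr
  rw [← integral_const_mul]
  refine (Real.le_norm_self _).trans (norm_integral_le_of_norm_le (hw_int.abs.const_mul B)
    (.of_forall fun x => ?_))
  rw [norm_mul, Real.norm_eq_abs, Real.norm_eq_abs]
  gcongr
  calc |Δ (fun y : E => paraboloid R y ^ 4) x| ≤ B / R ^ 2 * paraboloid R x ^ 2 :=
        abs_laplacian_paraboloid_pow_le hR₀ x
    _ ≤ B * 1 := mul_le_mul (div_le_self (by positivity) (one_le_pow₀ hR))
        (pow_le_one₀ paraboloid_nonneg paraboloid_le_one) (sq_nonneg _) (by positivity)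
    _ = B := mul_one B

lemma integral_indicator_closedBall_const_div_pow_le {n : ℕ} {b R : ℝ}
    (h_dim : Module.finrank ℝ E ≤ n) (hR : 1 ≤ R) (hb : 0 ≤ b) :
    ∫ x, (closedBall (0 : E) R).indicator (fun _ => b / R ^ n) x ∂μ ≤ b * μ.real (ball 0 1) := by
  have hR₀ : 0 < R := by linarith
  rw [integral_indicator_const _ measurableSet_closedBall,
    Measure.addHaar_real_closedBall μ 0 hR₀.le, smul_eq_mul]
  have h_pow : R ^ Module.finrank ℝ E / R ^ n ≤ 1 :=
    (div_le_one (by positivity)).2 (pow_le_pow_right₀ hR h_dim)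
  calc R ^ Module.finrank ℝ E * μ.real (ball 0 1) * (b / R ^ n)
      = R ^ Module.finrank ℝ E / R ^ n * (b * μ.real (ball 0 1)) := by field_simp
    _ ≤ b * μ.real (ball 0 1) := mul_le_of_le_one_left (by positivity) h_pow

theorem integrable_sq_of_sq_le_laplacian_add {c : ℝ} (h_dim : Module.finrank ℝ E ≤ 4)
    (hc : 0 < c) (hu : ContDiff ℝ 2 u) (hk : Integrable k μ)
    (huk : ∀ x, c * u x ^ 2 ≤ Δ u x + k x) : Integrable (fun x => u x ^ 2) μ := by
  set B : ℝ := 48 + 8 * Module.finrank ℝ E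
  have hu_sq : Continuous fun x => u x ^ 2 := hu.continuous.pow 2
  refine integrable_of_forall_integral_paraboloid_pow_mul_le
    (C := 2 / c * (B ^ 2 / (2 * c) * μ.real (ball 0 1) + ∫ x, |k x| ∂μ)) hu_sq
    (fun x => sq_nonneg _) fun R hR => ?_
  have hR₀ : 0 < R := by linarith
  have h_int : Integrable (fun x => paraboloid R x ^ 4 * u x ^ 2) μ :=
    (((continuous_paraboloid.pow 4).mul hu_sq).integrable_of_hasCompactSupport
      (hasCompactSupport_paraboloid_pow hR₀).mul_right)
  have h_ind : Integrable ((closedBall (0 : E) R).indicator fun _ => B ^ 2 / (2 * c * R ^ 4)) μ :=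
    (integrableOn_const measure_closedBall_lt_top.ne).integrable_indicator measurableSet_closedBall
  have h_int_Δ : Integrable (fun x => Δ (fun y : E => paraboloid R y ^ 4) x * u x) μ :=
    ((continuous_laplacian contDiff_paraboloid_pow).mul
      hu.continuous).integrable_of_hasCompactSupport
        (hasCompactSupport_laplacian (hasCompactSupport_paraboloid_pow hR₀)).mul_right
  have h_volume := integral_indicator_closedBall_const_div_pow_le (μ := μ) h_dim hR
    (by positivity : 0 ≤ B ^ 2 / (2 * c))
  simp only [div_div] at h_volume
  have h_test := integral_paraboloid_pow_mul_le hR₀ hu (hu_sq.const_mul c) hk huk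
  have h_young := integral_mono h_int_Δ ((h_int.const_mul (c / 2)).add h_ind) fun x =>
    laplacian_paraboloid_pow_mul_le hR₀ hc x (u x)
  simp only [Pi.add_apply] at h_young
  rw [integral_add (h_int.const_mul _) h_ind, integral_const_mul] at h_young
  simp only [mul_left_comm _ c, integral_const_mul] at h_test
  rw [div_mul_eq_mul_div, le_div_iff₀ hc]
  linarith

end Green

section NormPower

variable {E : Type*} [NormedAddCommGroup E]

lemma tendsto_norm_rpow_neg_cocompact [ProperSpace E] {s : ℝ} (hs : 0 < s) :
    Tendsto (fun x : E => ‖x‖ ^ (-s)) (cocompact E) (𝓝 0) :=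
  (tendsto_rpow_neg_atTop hs).comp (tendsto_norm_cocompact_atTop (E := E))

lemma exists_pos_forall_le_norm_of_eventually_cocompact [ProperSpace E] {p : E → Prop}
    (hp : ∀ᶠ x in cocompact E, p x) : ∃ R : ℝ, 0 < R ∧ ∀ x, R ≤ ‖x‖ → p x := by
  rw [← cobounded_eq_cocompact, hasBasis_cobounded_norm.eventually_iff] at hp
  obtain ⟨R, -, hR⟩ := hp
  exact ⟨max R 1, by positivity, fun x hx => hR ((le_max_left _ _).trans hx)⟩

variable [NormedSpace ℝ E] [FiniteDimensional ℝ E] [MeasurableSpace E] [BorelSpace E]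
  {μ : Measure E} [μ.IsAddHaarMeasure]

lemma integrable_of_isBigO_norm_rpow_neg {g : E → ℝ} {p : ℝ} (hp : Module.finrank ℝ E < p)
    (hg : LocallyIntegrable g μ) (hgO : g =O[cocompact E] fun x => ‖x‖ ^ (-p)) :
    Integrable g μ := by
  have hp₀ : 0 < p := (Nat.cast_nonneg _).trans_lt hp
  have h_bracket : (fun x : E => ‖x‖ ^ (-p)) =O[cocompact E] fun x => (1 + ‖x‖) ^ (-p) := by
    refine .of_bound (2 ^ p) ?_
    filter_upwards [(tendsto_norm_cocompact_atTop (E := E)).eventually_ge_atTop 1] with x hx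
    rw [Real.norm_of_nonneg (by positivity), Real.norm_of_nonneg (by positivity)]
    calc ‖x‖ ^ (-p) ≤ ((1 + ‖x‖) / 2) ^ (-p) :=
          Real.rpow_le_rpow_of_nonpos (by positivity) (by linarith) (neg_nonpos.2 hp₀.le)
      _ = 2 ^ p * (1 + ‖x‖) ^ (-p) := by
          rw [Real.div_rpow (by positivity) zero_le_two, Real.rpow_neg zero_le_two, div_inv_eq_mul,
            mul_comm]
  exact hg.integrable_of_isBigO_cocompact (hgO.trans h_bracket)
    ((integrable_one_add_norm hp).integrableAtFilter _)

end NormPower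

section Decay

variable {E : Type*} [NormedAddCommGroup E] [InnerProductSpace ℝ E] [FiniteDimensional ℝ E]
  {u : E → ℝ}

lemma eventually_strictSupersolutionAt_norm_rpow_neg (K : ℝ) {a s : ℝ} (ha : 0 < a) (hs : 0 < s)
    (hs_dim : s < Module.finrank ℝ E - 2) :
    ∀ᶠ x in cocompact E,
      StrictSupersolutionAt (fun y : E => K * ‖y‖ ^ (-2 - a)) (fun y => ‖y‖ ^ (-s)) x := by
  have h_gap : 0 < s * (Module.finrank ℝ E - 2 - s) := mul_pos hs (by linarith)
  have h_small : Tendsto (fun x : E => K * ‖x‖ ^ (-a)) (cocompact E) (𝓝 0) := by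
    simpa using (tendsto_norm_rpow_neg_cocompact ha).const_mul K
  filter_upwards [h_small.eventually_lt_const h_gap,
    (tendsto_norm_cocompact_atTop (E := E)).eventually_gt_atTop 0] with x hKx hx
  have hx₀ : x ≠ 0 := norm_pos_iff.1 hx
  refine ⟨contDiffAt_norm_rpow (-s) hx₀, by positivity, ?_⟩
  calc K * ‖x‖ ^ (-2 - a) * ‖x‖ ^ (-s) = K * ‖x‖ ^ (-a) * ‖x‖ ^ (-s - 2) := by
        rw [mul_assoc, mul_assoc, ← Real.rpow_add hx, ← Real.rpow_add hx]
        ring_nf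
    _ < s * (Module.finrank ℝ E - 2 - s) * ‖x‖ ^ (-s - 2) := by gcongr
    _ = -Δ (fun y : E => ‖y‖ ^ (-s)) x := by
        rw [laplacian_norm_rpow _ hx₀]
        ring

lemma eventually_strictSupersolutionAt_one_add_norm_rpow_neg (K : ℝ) {a δ : ℝ} (hδ : 0 < δ)
    (hδa : δ < a) (hδ_dim : δ < Module.finrank ℝ E - 2) :
    ∀ᶠ x in cocompact E,
      StrictSupersolutionAt (fun y : E => K * ‖y‖ ^ (-2 - a)) (fun y => 1 + ‖y‖ ^ (-δ)) x := by
  have h_gap : 0 < δ * (Module.finrank ℝ E - 2 - δ) := mul_pos hδ (by linarith)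
  have h_small : Tendsto (fun x : E => K * (‖x‖ ^ (-(a - δ)) + ‖x‖ ^ (-a))) (cocompact E)
      (𝓝 0) := by
    simpa using ((tendsto_norm_rpow_neg_cocompact (sub_pos.2 hδa)).add
      (tendsto_norm_rpow_neg_cocompact (hδ.trans hδa))).const_mul K
  filter_upwards [h_small.eventually_lt_const h_gap,
    (tendsto_norm_cocompact_atTop (E := E)).eventually_gt_atTop 0] with x hKx hx
  have hx₀ : x ≠ 0 := norm_pos_iff.1 hx
  have h_contDiff : ContDiffAt ℝ 2 (fun y : E => ‖y‖ ^ (-δ)) x := contDiffAt_norm_rpow (-δ) hx₀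
  have h_laplacian : Δ (fun y : E => 1 + ‖y‖ ^ (-δ)) x = Δ (fun y : E => ‖y‖ ^ (-δ)) x := by
    refine (contDiffAt_const.laplacian_add h_contDiff).trans ?_
    simp
  refine ⟨contDiffAt_const.add h_contDiff, by positivity, ?_⟩
  calc K * ‖x‖ ^ (-2 - a) * (1 + ‖x‖ ^ (-δ))
      = K * (‖x‖ ^ (-(a - δ)) + ‖x‖ ^ (-a)) * ‖x‖ ^ (-δ - 2) := by
        simp only [mul_assoc, mul_add, add_mul, mul_one, ← Real.rpow_add hx]
        ring_nf
    _ < δ * (Module.finrank ℝ E - 2 - δ) * ‖x‖ ^ (-δ - 2) := by gcongr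
    _ = -Δ (fun y : E => 1 + ‖y‖ ^ (-δ)) x := by
        rw [h_laplacian, laplacian_norm_rpow _ hx₀]
        ring

theorem isBigO_norm_rpow_neg_of_neg_laplacian_le {K a s : ℝ} (ha : 0 < a) (hs : 0 < s)
    (hs_dim : s < Module.finrank ℝ E - 2) (hu : ContDiff ℝ 2 u) (hu₀ : ∀ x, 0 ≤ u x)
    (hdecay : Tendsto u (cocompact E) (𝓝 0))
    (hsub : ∀ᶠ x in cocompact E, -Δ u x ≤ K * ‖x‖ ^ (-2 - a) * u x) :
    u =O[cocompact E] fun x => ‖x‖ ^ (-s) := by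
  obtain ⟨δ, hδ, hδ_lt⟩ := exists_between (lt_min ha (hs.trans hs_dim))
  obtain ⟨hδa, hδ_dim⟩ := lt_min_iff.1 hδ_lt
  obtain ⟨R, hR, h_outside⟩ := exists_pos_forall_le_norm_of_eventually_cocompact
    (hsub.and ((eventually_strictSupersolutionAt_norm_rpow_neg K ha hs hs_dim).and
      (eventually_strictSupersolutionAt_one_add_norm_rpow_neg K hδ hδa hδ_dim)))
  obtain ⟨B, hB₀, hB⟩ : ∃ B > 0, ∀ x ∈ sphere (0 : E) R, u x ≤ B := by
    obtain ⟨B, hB⟩ := (isCompact_sphere (0 : E) R).bddAbove_image hu.continuous.continuousOn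
    exact ⟨max B 1, by positivity, fun x hx => (hB (mem_image_of_mem u hx)).trans (le_max_left _ _)⟩
  set M : ℝ := B * R ^ s
  have hM : 0 < M := by positivity
  have h_mem : ∀ x ∈ (ball (0 : E) R)ᶜ, R ≤ ‖x‖ := fun x hx => by simpa using hx
  have h_bound : ∀ x ∈ (ball (0 : E) R)ᶜ, u x ≤ M * ‖x‖ ^ (-s) := by
    refine le_of_strictSupersolutionAt_of_tendsto_zero isOpen_ball.isClosed_compl
      (fun x _ => hu.contDiffAt) (fun x hx => (h_outside x (h_mem x hx)).2.1.const_mul hM)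
      (fun x hx => (h_outside x (h_mem x hx)).2.2) (fun x _ => ?_)
      (fun x hx => (h_outside x (h_mem x hx)).1) (fun x hx => ?_) hdecay
    · exact le_add_of_nonneg_right (by positivity)
    · have hx : x ∈ sphere (0 : E) R := frontier_ball_subset_sphere (by rwa [frontier_compl] at hx)
      rw [mem_sphere_zero_iff_norm.1 hx, mul_assoc, ← Real.rpow_add hR]
      simpa using hB x hx
  refine .of_bound M ?_
  filter_upwards [(tendsto_norm_cocompact_atTop (E := E)).eventually_ge_atTop R] with x hx
  rw [Real.norm_of_nonneg (hu₀ x), Real.norm_of_nonneg (by positivity)]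
  exact h_bound x (by simpa using hx)

end Decay

section SquareIntegrability

variable {E : Type*} [NormedAddCommGroup E] [InnerProductSpace ℝ E] [FiniteDimensional ℝ E]
  [MeasurableSpace E] [BorelSpace E] {μ : Measure E} [μ.IsAddHaarMeasure] {u : E → ℝ} {K a c : ℝ}

theorem integrable_sq_of_finrank_le_four (h_dim : Module.finrank ℝ E ≤ 4) (ha : 0 < a) (hc : 0 < c)
    (hu : ContDiff ℝ 2 u)
    (hsub : ∀ᶠ x in cocompact E, -Δ u x ≤ K * ‖x‖ ^ (-2 - a) * u x - c * u x ^ 2) :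
    Integrable (fun x => u x ^ 2) μ := by
  set k : E → ℝ := fun x => max (c / 2 * u x ^ 2 - Δ u x) 0
  have hk_cont : Continuous k :=
    ((continuous_const.mul (hu.continuous.pow 2)).sub (continuous_laplacian hu)).max
      continuous_const
  have hk_bigO : k =O[cocompact E] fun x => ‖x‖ ^ (-(4 + 2 * a)) := by
    refine .of_bound (K ^ 2 / (2 * c)) ?_
    filter_upwards [hsub] with x hx
    have h_young : K * ‖x‖ ^ (-2 - a) * u x - c / 2 * u x ^ 2 ≤
        K ^ 2 / (2 * c) * (‖x‖ ^ (-2 - a)) ^ 2 := by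
      linear_combination two_mul_le_add_mul_sq (a := u x) (b := K * ‖x‖ ^ (-2 - a)) hc / 2
    have h_rpow : (‖x‖ ^ (-2 - a)) ^ 2 = ‖x‖ ^ (-(4 + 2 * a)) := by
      rw [← Real.rpow_mul_natCast (norm_nonneg x)]
      push_cast
      ring_nf
    rw [h_rpow] at h_young
    rw [Real.norm_of_nonneg (le_max_right _ _), Real.norm_of_nonneg (by positivity)]
    exact max_le (by linarith) (by positivity)
  have hk : Integrable k μ := by
    refine integrable_of_isBigO_norm_rpow_neg ?_ hk_cont.locallyIntegrable hk_bigO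
    have : (Module.finrank ℝ E : ℝ) ≤ 4 := by exact_mod_cast h_dim
    linarith
  exact integrable_sq_of_sq_le_laplacian_add h_dim (half_pos hc) hu hk fun x => by
    linarith [le_max_left (c / 2 * u x ^ 2 - Δ u x) 0]

theorem integrable_sq_of_four_lt_finrank (h_dim : 4 < Module.finrank ℝ E) (ha : 0 < a)
    (hu : ContDiff ℝ 2 u) (hu₀ : ∀ x, 0 ≤ u x) (hdecay : Tendsto u (cocompact E) (𝓝 0))
    (hsub : ∀ᶠ x in cocompact E, -Δ u x ≤ K * ‖x‖ ^ (-2 - a) * u x) :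
    Integrable (fun x => u x ^ 2) μ := by
  have h_dim' : (4 : ℝ) < Module.finrank ℝ E := by exact_mod_cast h_dim
  obtain ⟨s, hs, hs_dim⟩ :=
    exists_between (by linarith : (Module.finrank ℝ E : ℝ) / 2 < Module.finrank ℝ E - 2)
  have hu_bigO :=
    isBigO_norm_rpow_neg_of_neg_laplacian_le ha (by linarith) hs_dim hu hu₀ hdecay hsub
  refine integrable_of_isBigO_norm_rpow_neg (p := 2 * s) (by linarith)
    (hu.continuous.pow 2).locallyIntegrable ((hu_bigO.pow 2).congr_right fun x => ?_)
  rw [← Real.rpow_mul_natCast (norm_nonneg x)]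
  push_cast
  ring_nf

theorem integrable_norm_gradient_sq (hu : ContDiff ℝ 2 u) (hu_int : Integrable (fun x => u x ^ 2) μ)
    (hsub : ∀ᶠ x in cocompact E, -(u x * Δ u x) ≤ K * u x ^ 2) :
    Integrable (fun x => ‖∇ u x‖ ^ 2) μ := by
  set k : E → ℝ := fun x => max (-(u x * Δ u x)) 0
  have hk_cont : Continuous k :=
    (hu.continuous.mul (continuous_laplacian hu)).neg.max continuous_const
  have hk_bigO : k =O[cocompact E] fun x => u x ^ 2 := by
    refine .of_bound |K| ?_
    filter_upwards [hsub] with x hx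
    rw [Real.norm_of_nonneg (le_max_right _ _), Real.norm_of_nonneg (sq_nonneg _)]
    exact max_le (hx.trans (by gcongr; exact le_abs_self K)) (by positivity)
  have hk : Integrable k μ := hk_cont.locallyIntegrable.integrable_of_isBigO_cocompact hk_bigO
    (hu_int.integrableAtFilter _)
  have h_grad_cont : Continuous fun x => ‖∇ u x‖ ^ 2 := by
    have := hu.continuous_fderiv two_ne_zero
    simp only [norm_gradient_sq_eq_sum (stdOrthonormalBasis ℝ E)]
    fun_prop
  refine integrable_of_le_laplacian_add (hu.pow 2) hu_int h_grad_cont (fun x => sq_nonneg _)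
    (hk.const_mul 2) fun x => ?_
  rw [laplacian_sq hu.contDiffAt]
  linarith [le_max_left (-(u x * Δ u x)) 0, sq_nonneg ‖∇ u x‖]

theorem stmt11_general (μ : Measure E) [μ.IsAddHaarMeasure] (ha : 0 < a) (hc : 0 < c)
    (hu : ContDiff ℝ 2 u) (hu₀ : ∀ x, 0 ≤ u x) (hdecay : Tendsto u (cocompact E) (𝓝 0))
    (hsub : ∀ᶠ x in cocompact E, -Δ u x ≤ K * ‖x‖ ^ (-2 - a) * u x - c * u x ^ 2) :
    Integrable (fun x => ‖∇ u x‖ ^ 2) μ ∧ Integrable (fun x => u x ^ 2) μ := by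
  have hu_linear : ∀ᶠ x in cocompact E, -Δ u x ≤ K * ‖x‖ ^ (-2 - a) * u x :=
    hsub.mono fun x hx => hx.trans (sub_le_self _ (by positivity))
  have hu_int : Integrable (fun x => u x ^ 2) μ := by
    rcases le_or_gt (Module.finrank ℝ E) 4 with h_dim | h_dim
    · exact integrable_sq_of_finrank_le_four h_dim ha hc hu hsub
    · exact integrable_sq_of_four_lt_finrank h_dim ha hu hu₀ hdecay hu_linear
  refine ⟨integrable_norm_gradient_sq (K := |K|) hu hu_int ?_, hu_int⟩
  filter_upwards [hu_linear, (tendsto_norm_cocompact_atTop (E := E)).eventually_ge_atTop 1]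
    with x hx h_norm
  have h_rpow : ‖x‖ ^ (-2 - a) ≤ 1 := Real.rpow_le_one_of_one_le_of_nonpos h_norm (by linarith)
  calc -(u x * Δ u x) = u x * -Δ u x := by ring
    _ ≤ u x * (K * ‖x‖ ^ (-2 - a) * u x) := by gcongr; exact hu₀ x
    _ = K * ‖x‖ ^ (-2 - a) * u x ^ 2 := by ring
    _ ≤ |K| * u x ^ 2 := by
      gcongr
      exact (mul_le_mul_of_nonneg_right (le_abs_self K) (by positivity)).trans
        (mul_le_of_le_one_right (abs_nonneg K) h_rpow)

end SquareIntegrability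

section LogisticEquation

lemma exists_pos_eventually_mul_sq_le_of_liminf_deriv_div_pos {f : ℝ → ℝ}
    (hf : ContinuousWithinAt f (Ici 0) 0) (hf₀ : 0 ≤ f 0)
    (hlim : 0 < liminf (fun t : ℝ => ((deriv f t / t : ℝ) : EReal)) (𝓝[>] 0)) :
    ∃ c > 0, ∀ᶠ t in 𝓝[>] 0, c * t ^ 2 ≤ f t := by
  obtain ⟨c, hc, hc_lt⟩ := EReal.lt_iff_exists_real_btwn.1 hlim
  replace hc : 0 < c := by exact_mod_cast hc
  obtain ⟨d, hd, h_deriv⟩ : ∃ d > 0, ∀ t ∈ Ioo 0 d, c * t < deriv f t := by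
    obtain ⟨d, hd, h_sub⟩ := mem_nhdsGT_iff_exists_Ioo_subset.1 (eventually_lt_of_lt_liminf hc_lt)
    refine ⟨d, hd, fun t ht => (lt_div_iff₀ ht.1).1 ?_⟩
    exact_mod_cast h_sub ht
  have hf_diff : ∀ t ∈ Ioo 0 d, DifferentiableAt ℝ f t := fun t ht =>
    differentiableAt_of_deriv_ne_zero ((mul_pos hc ht.1).trans (h_deriv t ht)).ne'
  have h_mono : MonotoneOn (fun t => f t - c / 2 * t ^ 2) (Ico 0 d) := by
    refine monotoneOn_of_deriv_nonneg (convex_Ico _ _) (.sub (fun t ht => ?_) (by fun_prop)) ?_ ?_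
    · rcases ht.1.eq_or_lt with rfl | ht₀
      · exact hf.mono Ico_subset_Ici_self
      · exact (hf_diff t ⟨ht₀, ht.2⟩).continuousAt.continuousWithinAt
    · rw [interior_Ico]
      exact .sub (fun t ht => (hf_diff t ht).differentiableWithinAt) (by fun_prop)
    · intro t ht
      rw [interior_Ico] at ht
      have h := (hf_diff t ht).hasDerivAt.fun_sub ((hasDerivAt_pow 2 t).const_mul (c / 2))
      rw [h.deriv]
      push_cast
      linarith [h_deriv t ht]
  refine ⟨c / 2, half_pos hc, ?_⟩
  filter_upwards [Ioo_mem_nhdsGT hd] with t ht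
  have h := h_mono (left_mem_Ico.2 hd) (Ioo_subset_Ico_self ht) ht.1.le
  simp only [ne_eq, OfNat.ofNat_ne_zero, not_false_eq_true, zero_pow, mul_zero, sub_zero] at h
  linarith

lemma lap_eq_laplacian {N : ℕ} {u : Euc N → ℝ} {x : Euc N} (hu : ContDiffAt ℝ 2 u x) :
    lap N u x = Δ u x := by
  simp only [laplacian_eq_sum_fderiv_fderiv (EuclideanSpace.basisFun (Fin N) ℝ) hu, lap,
    EuclideanSpace.basisFun_apply]

lemma IsSolution.exists_eventually_neg_laplacian_le {N : ℕ} {V u : Euc N → ℝ} {f : ℝ → ℝ}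
    {lam : ℝ} (hu : IsSolution N V f lam u) (hlam : 0 < lam) (hdec : CondVDecay N V)
    (hf : CondF N V f) :
    ∃ K a c : ℝ, 0 < a ∧ 0 < c ∧
      ∀ᶠ x in cocompact (Euc N), -Δ u x ≤ K * ‖x‖ ^ (-2 - a) * u x - c * u x ^ 2 := by
  obtain ⟨hf_diff, -, hf₀, -, hlim, -⟩ := hf
  obtain ⟨c, hc, hfc⟩ := exists_pos_eventually_mul_sq_le_of_liminf_deriv_div_pos
    hf_diff.continuous.continuousWithinAt hf₀.ge hlim
  obtain ⟨A, α, -, hα, hVA⟩ := hdec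
  refine ⟨lam * A, α, lam * c, hα, mul_pos hlam hc, ?_⟩
  have hu_tendsto : Tendsto u (cocompact (Euc N)) (𝓝[>] 0) :=
    tendsto_nhdsWithin_iff.2 ⟨hu.decay, .of_forall hu.pos⟩
  filter_upwards [hu_tendsto.eventually hfc,
    (tendsto_norm_cocompact_atTop (E := Euc N)).eventually_gt_atTop 0] with x hfx hx
  have hVx : V x * u x ≤ A * ‖x‖ ^ (-2 - α) * u x :=
    mul_le_mul_of_nonneg_right ((le_max_left _ _).trans (hVA x (norm_pos_iff.1 hx))) (hu.pos x).le
  calc -Δ u x = lam * (V x * u x - f (u x)) := by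
        rw [← lap_eq_laplacian hu.smooth.contDiffAt, hu.eqn]
    _ ≤ lam * (A * ‖x‖ ^ (-2 - α) * u x - c * u x ^ 2) := by gcongr
    _ = lam * A * ‖x‖ ^ (-2 - α) * u x - lam * c * u x ^ 2 := by ring

end LogisticEquation

/-- any solution `u` of `(P_λ)` has square-integrable gradient; together with
square-integrability of `u`, this means `u ∈ H¹(ℝ^N)`. -/
theorem stmt11 (N : ℕ) (hN : 3 ≤ N) (V V₁ V₂ : Euc N → ℝ)
    (hV : CondV N V V₁ V₂) (hdec : CondVDecay N V)
    (f : ℝ → ℝ) (hf : CondF N V f)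
    (lam : ℝ) (hlam : 0 < lam)
    (u : Euc N → ℝ) (hu : IsSolution N V f lam u) :
    Integrable (fun x : Euc N => ‖gradient u x‖ ^ 2) ∧
    Integrable (fun x : Euc N => u x ^ 2) := by
  obtain ⟨K, a, c, ha, hc, hsub⟩ := hu.exists_eventually_neg_laplacian_le hlam hdec hf
  exact stmt11_general volume ha hc hu.smooth (fun x => (hu.pos x).le) hu.decay hsub

end
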